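/- Let E be a real inner product space and let e_x : ℝ → E be differentiable on [0,T] with T ≥ 0, and let e_y, e_z : ℝ → F, G be functions into normed spaces. Under hypotheses (i)–(iv) of the finite-horizon bound with constants K_yz, K_yx, L_y, ε̄ ≥ 0 and μ ∈ ℝ, where the uniform interface bound ‖e_z(t)‖ ≤ ε̄ holds for all t ∈ [0,T], it holds for EVERY t ∈ [0,T] (not only at the final time) that ‖e_x(t)‖ + ‖e_y(t)‖ ≤ [(1 + K_yx)·L_y·K_yz·Φ(T,α) + K_yz]·ε̄, where α = μ + L_y·K_yx. -/

import Mathlib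

open RealInnerProductSpace

/-- Horizon-dependent amplification factor: `Φ(T,α) = (e^{αT} − 1)/α` for `α ≠ 0`,
and `Φ(T,0) = T`. -/
noncomputable def Phi (T α : ℝ) : ℝ :=
  if α = 0 then T else (Real.exp (α * T) - 1) / α

lemma Phi_mono (α : ℝ) {s t : ℝ} (h : s ≤ t) : Phi s α ≤ Phi t α := by
  unfold Phi
  split_ifs with h0
  · exact h
  · rcases lt_or_gt_of_ne h0 with hn | hp
    · apply div_le_div_of_nonpos_of_le hn.le
      have : Real.exp (α * t) ≤ Real.exp (α * s) := Real.exp_le_exp.2 (by nlinarith)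
      linarith
    · apply div_le_div_of_nonneg_right _ hp.le
      have : Real.exp (α * s) ≤ Real.exp (α * t) := Real.exp_le_exp.2 (by nlinarith)
      linarith

lemma Phi_zero (α : ℝ) : Phi 0 α = 0 := by
  unfold Phi
  split_ifs <;> simp

lemma gronwall_eq_Phi (δ α c t : ℝ) :
    gronwallBound δ α c t = δ * Real.exp (α * t) + c * Phi t α := by
  unfold gronwallBound Phi
  split_ifs with h
  · simp [h]
  · ring

/-- Proposition 1: a uniform calibrated interface bound `ε̄` yields a uniform
simulator-level deviation bound at every time `t ∈ [0,T]`. -/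
theorem conformal_to_closedloop_bound
    {E F G : Type*} [NormedAddCommGroup E] [InnerProductSpace ℝ E]
    [NormedAddCommGroup F] [NormedSpace ℝ F]
    [NormedAddCommGroup G] [NormedSpace ℝ G]
    (T : ℝ) (hT : 0 ≤ T)
    (e_x : ℝ → E) (e_y : ℝ → F) (e_z : ℝ → G)
    (hdiff : ∀ t ∈ Set.Icc (0 : ℝ) T, DifferentiableAt ℝ e_x t)
    (K_yz K_yx L_y ε μ : ℝ)
    (hKyz : 0 ≤ K_yz) (hKyx : 0 ≤ K_yx) (hLy : 0 ≤ L_y) (hε : 0 ≤ ε)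
    (h1 : ∀ t ∈ Set.Icc (0 : ℝ) T, ‖e_y t‖ ≤ K_yz * ‖e_z t‖ + K_yx * ‖e_x t‖)
    (h2 : ∀ t ∈ Set.Icc (0 : ℝ) T,
      ⟪deriv e_x t, e_x t⟫ ≤ μ * ‖e_x t‖ ^ 2 + L_y * ‖e_y t‖ * ‖e_x t‖)
    (h3 : ∀ t ∈ Set.Icc (0 : ℝ) T, ‖e_z t‖ ≤ ε)
    (h4 : e_x 0 = 0) :
    ∀ t ∈ Set.Icc (0 : ℝ) T,
      ‖e_x t‖ + ‖e_y t‖ ≤ ((1 + K_yx) * L_y * K_yz * Phi T (μ + L_y * K_yx) + K_yz) * ε := by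
  intro t ht
  set α := μ + L_y * K_yx with hα
  set c := L_y * K_yz * ε with hc
  have hc0 : 0 ≤ c := by positivity
  have hPt : 0 ≤ Phi t α := by
    rw [← Phi_zero α]; exact Phi_mono α ht.1
  have key : ∀ s ∈ Set.Icc (0 : ℝ) T,
      ⟪deriv e_x s, e_x s⟫ ≤ α * ‖e_x s‖ ^ 2 + c * ‖e_x s‖ := by
    intro s hs
    have hy : ‖e_y s‖ ≤ K_yz * ε + K_yx * ‖e_x s‖ :=
      (h1 s hs).trans (by gcongr; exact h3 s hs)
    have : L_y * ‖e_y s‖ * ‖e_x s‖ ≤ L_y * (K_yz * ε + K_yx * ‖e_x s‖) * ‖e_x s‖ := by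
      gcongr
    calc _ ≤ _ := h2 s hs
      _ ≤ _ := by rw [hα, hc]; linarith
  have step : ∀ δ > 0, ‖e_x t‖ ≤ gronwallBound δ α (c + δ) t := by
    intro δ hδ
    have gpos : ∀ s ∈ Set.Icc (0 : ℝ) T, 0 < gronwallBound δ α (c + δ) s := by
      intro s hs
      have hP : 0 ≤ Phi s α := by
        rw [← Phi_zero α]; exact Phi_mono α hs.1
      rw [gronwall_eq_Phi]
      positivity
    have hfd : ∀ s ∈ Set.Icc (0 : ℝ) T,
        HasDerivAt (fun u => ‖e_x u‖ ^ 2) (2 * ⟪e_x s, deriv e_x s⟫) s :=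
      fun s hs => (hdiff s hs).hasDerivAt.norm_sq
    have main := image_le_of_deriv_right_lt_deriv_boundary
      (f := fun u => ‖e_x u‖ ^ 2) (f' := fun s => 2 * ⟪e_x s, deriv e_x s⟫)
      (a := 0) (b := T)
      (B := fun s => gronwallBound δ α (c + δ) s ^ 2)
      (B' := fun s => 2 * gronwallBound δ α (c + δ) s *
        (α * gronwallBound δ α (c + δ) s + (c + δ)))
      (fun s hs => (hfd s hs).continuousAt.continuousWithinAt)
      (fun s hs => (hfd s ⟨hs.1, hs.2.le⟩).hasDerivWithinAt)
      (by simp [h4]; positivity)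
      (fun s => by
        have h := (hasDerivAt_gronwallBound δ α (c + δ) s).fun_pow 2
        simpa using h)
      (by
        intro s hs heq
        have hs' : s ∈ Set.Icc (0 : ℝ) T := ⟨hs.1, hs.2.le⟩
        have hg := gpos s hs'
        have hn : ‖e_x s‖ = gronwallBound δ α (c + δ) s :=
          (pow_left_inj₀ (norm_nonneg _) hg.le two_ne_zero).1 heq
        have hk := key s hs'
        rw [real_inner_comm, hn] at hk
        have := mul_pos hδ hg
        show 2 * ⟪e_x s, deriv e_x s⟫ < _
        nlinarith)
      ht
    exact (pow_le_pow_iff_left₀ (norm_nonneg _) (gpos t ht).le two_ne_zero).1 main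
  have hx : ‖e_x t‖ ≤ c * Phi t α := by
    apply le_of_forall_pos_le_add
    intro η hη
    have hD : 0 < Real.exp (α * t) + Phi t α := by positivity
    have h := step (η / (Real.exp (α * t) + Phi t α)) (by positivity)
    rw [gronwall_eq_Phi] at h
    have h' : η / (Real.exp (α * t) + Phi t α) * (Real.exp (α * t) + Phi t α) = η :=
      div_mul_cancel₀ _ hD.ne'
    linarith
  have hx' : ‖e_x t‖ ≤ c * Phi T α :=
    hx.trans (mul_le_mul_of_nonneg_left (Phi_mono α ht.2) hc0)
  have hy : ‖e_y t‖ ≤ K_yz * ε + K_yx * ‖e_x t‖ :=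
    (h1 t ht).trans (by gcongr; exact h3 t ht)
  have hz : (1 + K_yx) * ‖e_x t‖ ≤ (1 + K_yx) * (c * Phi T α) := by gcongr
  calc ‖e_x t‖ + ‖e_y t‖ ≤ (1 + K_yx) * (c * Phi T α) + K_yz * ε := by linarith
    _ = _ := by rw [hc]; ring
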